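/- For n ≥ 5, the Segre product of n copies of ℙ³ (tensors in (ℂ⁴)^{⊗n}) is k-identifiable for every positive integer k with k ≤ (4^n − 4^{n−3})/(3n+1). -/

import Mathlib

open scoped TensorProduct
open PiTensorProduct

noncomputable section

/-- The space of tensors `V = ℂ^{a₁+1} ⊗ ⋯ ⊗ ℂ^{a_q+1}`. -/
abbrev Ten (q : ℕ) (a : Fin q → ℕ) : Type :=
  ⨂[ℂ] i : Fin q, (Fin (a i + 1) → ℂ)

/-- Index type for the coordinates on the parameter space `W_k`. -/
abbrev WIdx (q : ℕ) (a : Fin q → ℕ) (k : ℕ) : Type :=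
  Fin k × Σ j : Fin q, Fin (a j + 1)

/-- Index type for the standard (decomposable) basis of `Ten q a`. -/
abbrev BIdx (q : ℕ) (a : Fin q → ℕ) : Type := ∀ j : Fin q, Fin (a j + 1)

/-- A tensor is decomposable if it is `v₁ ⊗ ⋯ ⊗ v_q` with all `vᵢ ≠ 0`. -/
def IsDecomposable {q : ℕ} {a : Fin q → ℕ} (t : Ten q a) : Prop :=
  ∃ v : ∀ j : Fin q, Fin (a j + 1) → ℂ, (∀ j, v j ≠ 0) ∧ t = tprod ℂ v

/-- The affine tangent space at `v₁ ⊗ ⋯ ⊗ v_q` to the cone over the Segre variety: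
the span of all tensors obtained by replacing one factor of `v` by an arbitrary vector. -/
def tangent {q : ℕ} (a : Fin q → ℕ) (v : ∀ j : Fin q, Fin (a j + 1) → ℂ) :
    Submodule ℂ (Ten q a) :=
  Submodule.span ℂ
    {x | ∃ (j : Fin q) (u : Fin (a j + 1) → ℂ), x = tprod ℂ (Function.update v j u)}

/-- The map `Φ : W_k → V` sending a `k`-tuple of factor vectors to the sum of the
corresponding decomposable tensors. -/
def Phi {q : ℕ} (a : Fin q → ℕ) {k : ℕ}
    (p : Fin k → ∀ j : Fin q, Fin (a j + 1) → ℂ) : Ten q a :=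
  ∑ i, tprod ℂ (p i)

/-- Evaluation of a polynomial function on `W_k` at a parameter point. -/
def evalW {q : ℕ} {a : Fin q → ℕ} {k : ℕ}
    (F : MvPolynomial (WIdx q a k) ℂ)
    (p : Fin k → ∀ j : Fin q, Fin (a j + 1) → ℂ) : ℂ :=
  MvPolynomial.eval (fun x => p x.1 x.2.1 x.2.2) F

/-- `k`-identifiability of the Segre product `ℙ^{a₁} × ⋯ × ℙ^{a_q}`:
there is a nonzero polynomial function `F` on `W_k` such that whenever `F(p) ≠ 0`,
the tensor `Φ(p)` has a rank-`k` decomposition, and any two rank-`k` decompositions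
of `Φ(p)` agree as multisets of decomposable tensors. -/
def Identifiable (q : ℕ) (a : Fin q → ℕ) (k : ℕ) : Prop :=
  ∃ F : MvPolynomial (WIdx q a k) ℂ,
    (∃ p, evalW F p ≠ 0) ∧
    ∀ p, evalW F p ≠ 0 →
      ((∃ t : Fin k → Ten q a, (∀ i, IsDecomposable (t i)) ∧ ∑ i, t i = Phi a p) ∧
       ∀ s t : Fin k → Ten q a,
         (∀ i, IsDecomposable (s i)) → (∀ i, IsDecomposable (t i)) →
         ∑ i, s i = Phi a p → ∑ i, t i = Phi a p →
         Finset.univ.val.map s = Finset.univ.val.map t)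

/-- The standard decomposable basis vector of `Ten q a` indexed by `f`. -/
def basisVec {q : ℕ} (a : Fin q → ℕ) (f : BIdx q a) : Ten q a :=
  tprod ℂ fun j => Pi.single (f j) 1

/-- The vector of `Ten q a` with coordinates `c` in the standard basis. -/
def fromCoords {q : ℕ} (a : Fin q → ℕ) (c : BIdx q a → ℂ) : Ten q a :=
  ∑ f : BIdx q a, c f • basisVec a f

/-- Evaluation of a polynomial function on `W_k × V^e` at a parameter point. -/
def evalWV {q : ℕ} {a : Fin q → ℕ} {k e : ℕ}
    (F : MvPolynomial (WIdx q a k ⊕ (Fin e × BIdx q a)) ℂ)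
    (p : Fin k → ∀ j : Fin q, Fin (a j + 1) → ℂ)
    (c : Fin e → BIdx q a → ℂ) : ℂ :=
  MvPolynomial.eval (Sum.elim (fun x => p x.1 x.2.1 x.2.2) (fun y => c y.1 y.2)) F

/-- `TangentGeneral q a k d` says: the general linear subspace of `V` of dimension `d`
which is tangent to the Segre at `k` general points is tangent only at those points.
Concretely, with `e = d - k(1 + Σᵢ aᵢ)`, there is a nonzero polynomial function `F` on
`W_k × V^e` such that whenever `F ≠ 0` at `(p, c)`, the space `L` spanned by the tangent
spaces at the `k` decomposable tensors determined by `p` together with the `e` extra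
vectors determined by `c` has dimension exactly `d`, and any decomposable tensor whose
tangent space lies in `L` is a scalar multiple of one of the `k` given ones. -/
def TangentGeneral (q : ℕ) (a : Fin q → ℕ) (k d : ℕ) : Prop :=
  ∃ F : MvPolynomial (WIdx q a k ⊕ (Fin (d - k * (1 + ∑ j, a j)) × BIdx q a)) ℂ,
    (∃ p c, evalWV F p c ≠ 0) ∧
    ∀ p c, evalWV F p c ≠ 0 →
      (Module.finrank ℂ
          ↥((⨆ i, tangent a (p i)) ⊔
            Submodule.span ℂ (Set.range fun m => fromCoords a (c m))) = d ∧
       ∀ w : ∀ j : Fin q, Fin (a j + 1) → ℂ, (∀ j, w j ≠ 0) →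
         tangent a w ≤
           (⨆ i, tangent a (p i)) ⊔
             Submodule.span ℂ (Set.range fun m => fromCoords a (c m)) →
         ∃ (i : Fin k) (t : ℂ), tprod ℂ w = t • tprod ℂ (p i))

/-- If the localization at the generic point of a system of polynomial equations with parameters has
no solution in any finite extension of the field of rational functions in the parameters, then the
system has no solution for general values of the parameters. -/
theorem exists_ne_zero_forall_not_common_zero {σ τ α : Type} [Finite τ]
    (f : α → MvPolynomial τ (MvPolynomial σ ℂ))
    (hf : ∀ (L : Type) [Field L] [Algebra (MvPolynomial σ ℂ) L]
      [Algebra (FractionRing (MvPolynomial σ ℂ)) L]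
      [IsScalarTower (MvPolynomial σ ℂ) (FractionRing (MvPolynomial σ ℂ)) L]
      [FiniteDimensional (FractionRing (MvPolynomial σ ℂ)) L] (y : τ → L),
      ∃ a, MvPolynomial.aeval y (f a) ≠ 0) :
    ∃ F : MvPolynomial σ ℂ, F ≠ 0 ∧ ∀ p : σ → ℂ, MvPolynomial.eval p F ≠ 0 →
      ∀ q : τ → ℂ, ∃ a, MvPolynomial.eval₂ (MvPolynomial.eval p) q (f a) ≠ 0 := by
  classical
  set R := MvPolynomial σ ℂ
  set K := FractionRing R
  let : Algebra (MvPolynomial τ R) (MvPolynomial τ K) := MvPolynomial.algebraMvPolynomial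
  let J : Ideal (MvPolynomial τ R) := Ideal.span (Set.range f)
  have htop : J.map (algebraMap (MvPolynomial τ R) (MvPolynomial τ K)) = ⊤ := by
    by_contra hne
    obtain ⟨m, hm, hle⟩ := Ideal.exists_le_maximal _ hne
    let : Field (MvPolynomial τ K ⧸ m) := Ideal.Quotient.field m
    have : FiniteDimensional K (MvPolynomial τ K ⧸ m) :=
      finite_of_finite_type_of_isJacobsonRing K (MvPolynomial τ K ⧸ m)
    obtain ⟨a, ha⟩ := hf (MvPolynomial τ K ⧸ m)
      (fun i => Ideal.Quotient.mk m (MvPolynomial.X i))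
    apply ha
    have h1 : ∀ g : MvPolynomial τ R, MvPolynomial.eval₂Hom (algebraMap R (MvPolynomial τ K ⧸ m))
        (fun i => Ideal.Quotient.mk m (MvPolynomial.X i)) g
        = Ideal.Quotient.mk m (algebraMap (MvPolynomial τ R) (MvPolynomial τ K) g) := by
      intro g
      induction g using MvPolynomial.induction_on with
      | C r =>
        rw [MvPolynomial.eval₂Hom_C, MvPolynomial.algebraMap_def, MvPolynomial.map_C]
        rfl
      | add p q hp hq => simp only [map_add, hp, hq]
      | mul_X p i hp =>
        simp only [map_mul, hp, MvPolynomial.eval₂Hom_X', MvPolynomial.algebraMap_def,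
          MvPolynomial.map_X]
    rw [MvPolynomial.aeval_def, ← MvPolynomial.coe_eval₂Hom, h1, Ideal.Quotient.eq_zero_iff_mem]
    exact hle (Ideal.mem_map_of_mem _ (Ideal.subset_span ⟨a, rfl⟩))
  have h1 : (1 : MvPolynomial τ K) ∈ J.map (algebraMap (MvPolynomial τ R) (MvPolynomial τ K)) := by
    rw [htop]; trivial
  rw [IsLocalization.mem_map_algebraMap_iff
    ((nonZeroDivisors R).map (MvPolynomial.C (σ := τ)))] at h1
  obtain ⟨⟨⟨g, hg⟩, ⟨_, F, hF, rfl⟩⟩, h⟩ := h1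
  have hF0 : F ≠ 0 := nonZeroDivisors.ne_zero hF
  have hCF : MvPolynomial.C F ∈ J := by
    have hinj : Function.Injective (algebraMap (MvPolynomial τ R) (MvPolynomial τ K)) :=
      MvPolynomial.map_injective _ (IsFractionRing.injective R K)
    rw [one_mul] at h
    have := hinj h
    rw [show (MvPolynomial.C F : MvPolynomial τ R) = g from this]
    exact hg
  refine ⟨F, hF0, fun p hp q => ?_⟩
  by_contra! hq
  apply hp
  have : J ≤ RingHom.ker (MvPolynomial.eval₂Hom (MvPolynomial.eval p) q) := by
    rw [Ideal.span_le]
    rintro _ ⟨a, rfl⟩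
    exact hq a
  simpa using this hCF

/-- If `h` vanishes at all common zeros of the `f a` in finite extensions of the field of rational
functions in the parameters, then it does so for general values of the parameters. -/
theorem exists_ne_zero_forall_eq_zero {σ τ α : Type} [Finite τ]
    (f : α → MvPolynomial τ (MvPolynomial σ ℂ)) (h : MvPolynomial τ (MvPolynomial σ ℂ))
    (hf : ∀ (L : Type) [Field L] [Algebra (MvPolynomial σ ℂ) L]
      [Algebra (FractionRing (MvPolynomial σ ℂ)) L]
      [IsScalarTower (MvPolynomial σ ℂ) (FractionRing (MvPolynomial σ ℂ)) L]
      [FiniteDimensional (FractionRing (MvPolynomial σ ℂ)) L] (y : τ → L),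
      (∀ a, MvPolynomial.aeval y (f a) = 0) → MvPolynomial.aeval y h = 0) :
    ∃ F : MvPolynomial σ ℂ, F ≠ 0 ∧ ∀ p : σ → ℂ, MvPolynomial.eval p F ≠ 0 →
      ∀ q : τ → ℂ, (∀ a, MvPolynomial.eval₂ (MvPolynomial.eval p) q (f a) = 0) →
        MvPolynomial.eval₂ (MvPolynomial.eval p) q h = 0 := by
  obtain ⟨F, hF, hF'⟩ := exists_ne_zero_forall_not_common_zero (σ := σ) (τ := Option τ)
    (α := Option α) (fun a => a.elim
      (1 - MvPolynomial.X none * MvPolynomial.rename some h)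
      (fun a => MvPolynomial.rename some (f a))) (by
    intro L _ _ _ _ _ y
    by_contra! hy
    have h1 : ∀ a, MvPolynomial.aeval (y ∘ some) (f a) = 0 := fun a => by
      have := hy (some a)
      simpa [MvPolynomial.aeval_rename] using this
    have h2 := hy none
    simp [MvPolynomial.aeval_rename, hf L _ h1] at h2)
  refine ⟨F, hF, fun p hp q hq => ?_⟩
  by_contra hne
  obtain ⟨a, ha⟩ := hF' p hp
    (fun o => o.elim (MvPolynomial.eval₂ (MvPolynomial.eval p) q h)⁻¹ q)
  apply ha
  have h3 : (fun o : Option τ => o.elim (MvPolynomial.eval₂ (MvPolynomial.eval p) q h)⁻¹ q) ∘ some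
    = q := rfl
  cases a with
  | none =>
    simp only [Option.elim, ← MvPolynomial.coe_eval₂Hom] at hne ⊢
    simp only [map_sub, map_mul, map_one]
    simp only [MvPolynomial.coe_eval₂Hom, MvPolynomial.eval₂_rename, MvPolynomial.eval₂_X] at hne ⊢
    erw [h3]
    rw [inv_mul_cancel₀ hne, sub_self]
  | some a =>
    simp only [Option.elim, MvPolynomial.eval₂_rename]
    exact hq a

/-- Over a finite extension `L` of the field of rational functions, the derivatives of the
variables along a derivation of `L` can be prescribed. -/
theorem exists_derivation_of_finite_fractionRing {σ : Type} (L : Type) [Field L]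
    [Algebra (MvPolynomial σ ℂ) L]
    [Algebra (FractionRing (MvPolynomial σ ℂ)) L]
    [IsScalarTower (MvPolynomial σ ℂ) (FractionRing (MvPolynomial σ ℂ)) L]
    [FiniteDimensional (FractionRing (MvPolynomial σ ℂ)) L] (u : σ → L) :
    ∃ D : Derivation ℤ L L, ∀ i, D (algebraMap (MvPolynomial σ ℂ) L (MvPolynomial.X i)) = u i := by
  set R := MvPolynomial σ ℂ
  set K := FractionRing R
  let : Algebra ℂ L := ((algebraMap R L).comp MvPolynomial.C).toAlgebra
  have : IsScalarTower ℂ R L := IsScalarTower.of_algebraMap_eq fun _ => rfl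
  have : Algebra.FormallyEtale R K := Algebra.FormallyEtale.of_isLocalization (nonZeroDivisors R)
  have : Algebra.FormallyEtale K L := Algebra.FormallyEtale.of_isSeparable K L
  have : Algebra.FormallyEtale R L := Algebra.FormallyEtale.comp R K L
  let d : Derivation ℂ R L := MvPolynomial.mkDerivation ℂ u
  let φ : Ω[L⁄ℂ] →ₗ[L] L := (LinearMap.liftBaseChange L d.liftKaehlerDifferential) ∘ₗ
    (KaehlerDifferential.tensorKaehlerEquivOfFormallyEtale ℂ R L).symm.toLinearMap
  refine ⟨(φ.compDer (KaehlerDifferential.D ℂ L)).restrictScalars ℤ, fun i => ?_⟩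
  have h := KaehlerDifferential.tensorKaehlerEquivOfFormallyEtale_symm_D_algebraMap ℂ R L
    (MvPolynomial.X i : MvPolynomial σ ℂ)
  change LinearMap.liftBaseChange L d.liftKaehlerDifferential
    ((KaehlerDifferential.tensorKaehlerEquivOfFormallyEtale ℂ R L).symm
      (KaehlerDifferential.D ℂ L (algebraMap R L (MvPolynomial.X i)))) = u i
  rw [h, LinearMap.liftBaseChange_tmul, one_smul, Derivation.liftKaehlerDifferential_comp_D]
  exact MvPolynomial.mkDerivation_X ℂ u i

/-- Linear independence is an open condition: if a matrix of polynomials has independent rows at one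
point, it has independent rows wherever a suitable polynomial does not vanish. -/
theorem exists_forall_linearIndepOn {P ζ κ : Type} [Finite ζ] [Finite κ]
    (M : ζ → κ → MvPolynomial P ℂ) (A : Set ζ) (p : P → ℂ)
    (h : LinearIndepOn ℂ (fun i f => MvPolynomial.eval p (M i f)) A) :
    ∃ d : MvPolynomial P ℂ, MvPolynomial.eval p d ≠ 0 ∧
      ∀ (F : Type) [Field F] (φ : MvPolynomial P ℂ →+* F), φ d ≠ 0 →
        LinearIndepOn F (fun i f => φ (M i f)) A := by
  classical
  have := Fintype.ofFinite A
  have := Fintype.ofFinite κ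
  let M' : Matrix A κ (MvPolynomial P ℂ) := Matrix.of fun i f => M i f
  let N : Matrix A κ ℂ := M'.map (MvPolynomial.eval p)
  have hN : Function.Injective N.vecMul := Matrix.vecMul_injective_iff.2 h
  obtain ⟨g, hg⟩ := N.vecMulLinear.exists_leftInverse_of_injective
    (LinearMap.ker_eq_bot.2 hN)
  let B : Matrix κ A ℂ := (LinearMap.toMatrix' g).transpose
  have hB : N * B = 1 := by
    have : LinearMap.toMatrix' g * N.transpose = 1 := by
      have h1 := congrArg LinearMap.toMatrix' hg
      rw [LinearMap.toMatrix'_comp, LinearMap.toMatrix'_id] at h1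
      rwa [show N.vecMulLinear = Matrix.toLin' N.transpose by
        ext; simp, LinearMap.toMatrix'_toLin'] at h1
    rw [← Matrix.transpose_inj, Matrix.transpose_mul, Matrix.transpose_transpose, this,
      Matrix.transpose_one]
  refine ⟨Matrix.det (M' * (B.map MvPolynomial.C : Matrix κ A (MvPolynomial P ℂ)) : Matrix A A _),
    ?_, fun F _ φ hd => ?_⟩
  · rw [RingHom.map_det, RingHom.mapMatrix_apply, Matrix.map_mul, Matrix.map_map]
    have : (B.map (⇑(MvPolynomial.eval p) ∘ ⇑MvPolynomial.C)) = B := by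
      ext; simp
    rw [this]
    change (N * B).det ≠ 0
    simp [hB]
  · rw [RingHom.map_det, RingHom.mapMatrix_apply, Matrix.map_mul] at hd
    change LinearIndependent F (M'.map φ).row
    rw [← Matrix.vecMul_injective_iff]
    rw [← Matrix.coe_vecMulLinear, ← LinearMap.ker_eq_bot, LinearMap.ker_eq_bot']
    intro v hv
    refine Matrix.eq_zero_of_vecMul_eq_zero hd ?_
    rw [← Matrix.vecMul_vecMul]
    rw [Matrix.vecMulLinear_apply] at hv
    rw [hv, Matrix.zero_vecMul]

theorem linearIndepOn_iff_fintype {F ζ V : Type} [Field F] [Fintype ζ] [AddCommGroup V] [Module F V]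
    {v : ζ → V} {A : Set ζ} :
    LinearIndepOn F v A ↔ ∀ l : ζ → F, (∀ z, z ∉ A → l z = 0) → ∑ z, l z • v z = 0 → l = 0 := by
  classical
  rw [linearIndepOn_iff]
  constructor
  · intro h l hl h0
    have := h (Finsupp.equivFunOnFinite.symm l) (by
      rw [Finsupp.mem_supported']
      intro z hz
      exact hl z hz) (by
      rw [Finsupp.linearCombination_apply, Finsupp.sum_fintype _ _ (by simp)]
      exact h0)
    ext z
    exact DFunLike.congr_fun this z
  · intro h l hl h0
    have := h l (by
      rw [Finsupp.mem_supported'] at hl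
      exact hl) (by
      rw [Finsupp.linearCombination_apply, Finsupp.sum_fintype _ _ (by simp)] at h0
      exact h0)
    ext z
    exact congrFun this z

/-- The coordinates of a decomposable tensor with given factors. -/
def seg {n : ℕ} {R : Type} [CommRing R] (x : Fin n → Fin 4 → R) : (Fin n → Fin 4) → R :=
  fun f => ∏ j, x j (f j)

/-- The family of decomposable tensors built from a family of frames: the frame indexed by `i`
contributes all products of its vectors. -/
def frameSeg {n : ℕ} {R ι : Type} [CommRing R] (g : ι → Fin n → Fin 4 → Fin 4 → R)
    (z : ι × (Fin n → Fin 4)) : (Fin n → Fin 4) → R :=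
  seg fun j => g z.1 j (z.2 j)

/-- The decomposable tensors selected by `A` are linearly independent for some frames over `ℂ`. -/
def FrameIndep {n : ℕ} {ι : Type} (A : Set (ι × (Fin n → Fin 4))) : Prop :=
  ∃ g : ι → Fin n → Fin 4 → Fin 4 → ℂ, LinearIndepOn ℂ (frameSeg g) A

theorem FrameIndep.transport {n : ℕ} {ι ι' : Type} {A : Set (ι × (Fin n → Fin 4))}
    (h : FrameIndep A) {A' : Set (ι' × (Fin n → Fin 4))} (ψ : ι' → ι) (σ : Equiv.Perm (Fin n))
    (hA : ∀ z ∈ A', (ψ z.1, z.2 ∘ σ) ∈ A)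
    (hψ : ∀ z ∈ A', ∀ w ∈ A', ψ z.1 = ψ w.1 → z.1 = w.1) : FrameIndep A' := by
  obtain ⟨g, hg⟩ := h
  refine ⟨fun i j => g (ψ i) (σ.symm j), ?_⟩
  have h1 : LinearIndependent ℂ
      (fun z : A' => frameSeg g (ψ z.1.1, z.1.2 ∘ σ)) := by
    have := LinearIndependent.comp hg (fun z : A' => ⟨(ψ z.1.1, z.1.2 ∘ σ), hA z.1 z.2⟩) (by
      intro z w hzw
      simp only [Subtype.mk.injEq, Prod.mk.injEq] at hzw
      ext1
      refine Prod.ext (hψ _ z.2 _ w.2 hzw.1) ?_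
      exact σ.surjective.injective_comp_right hzw.2)
    exact this
  have h2 := h1.map' (LinearEquiv.funCongrLeft ℂ ℂ (Equiv.arrowCongr σ (Equiv.refl (Fin 4))).symm
    ).toLinearMap (LinearEquiv.ker _)
  suffices h3 : (fun z : A' => frameSeg (fun i j => g (ψ i) (σ.symm j)) z.1) = _ from
    (congrArg (fun v : A' → _ => LinearIndependent ℂ v) h3).mpr h2
  ext z f
  simp only [frameSeg, seg, Function.comp_apply, LinearEquiv.coe_coe, LinearEquiv.funCongrLeft_apply,
    LinearMap.funLeft_apply, Equiv.arrowCongr_symm, Equiv.arrowCongr_apply]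
  rw [← Equiv.prod_comp σ]
  simp

theorem FrameIndep.mono {n : ℕ} {ι : Type} {A A' : Set (ι × (Fin n → Fin 4))}
    (h : FrameIndep A) (hA : A' ⊆ A) : FrameIndep A' :=
  h.imp fun _ hg => hg.mono hA

theorem FrameIndep.union_points {n : ℕ} {ι : Type} [Finite ι] {A : Set (ι × (Fin n → Fin 4))}
    (h : FrameIndep A) (T : Finset ι) (hT : ∀ z ∈ A, z.1 ∉ T)
    (hcard : A.ncard + T.card ≤ 4 ^ n) : FrameIndep (A ∪ {z | z.1 ∈ T ∧ z.2 = 0}) := by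
  classical
  have := Fintype.ofFinite ι
  induction T using Finset.induction_on with
  | empty => simpa using h
  | insert i T hi ih =>
    rw [Finset.card_insert_of_notMem hi] at hcard
    obtain ⟨g, hg⟩ := ih (fun z hz h' => hT z hz (Finset.mem_insert_of_mem h')) (by omega)
    set B := A ∪ {z | z.1 ∈ T ∧ z.2 = 0} with hB
    have hBi : ∀ z ∈ B, z.1 ≠ i := by
      rintro z (hz | hz) rfl
      · exact hT z hz (Finset.mem_insert_self _ _)
      · exact hi hz.1
    have hBc : B.ncard < 4 ^ n := by
      have h1 : {z : ι × (Fin n → Fin 4) | z.1 ∈ T ∧ z.2 = 0}.ncard ≤ T.card := by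
        have : {z : ι × (Fin n → Fin 4) | z.1 ∈ T ∧ z.2 = 0} ⊆ 
            ((T.image fun i => (i, 0) : Finset (ι × (Fin n → Fin 4))) : Set _) := by
          rintro ⟨a, b⟩ ⟨h1, h2⟩
          simp only [Finset.coe_image, Set.mem_image]
          exact ⟨a, h1, by rw [← h2]⟩
        refine (Set.ncard_le_ncard this).trans ?_
        rw [Set.ncard_coe_finset]
        exact Finset.card_image_le
      have := Set.ncard_union_le A {z | z.1 ∈ T ∧ z.2 = 0}
      rw [← hB] at this
      omega
    have hspan : ∃ f : Fin n → Fin 4,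
        (Pi.single f 1 : (Fin n → Fin 4) → ℂ) ∉ Submodule.span ℂ (frameSeg g '' B) := by
      by_contra! hf
      have htop : Submodule.span ℂ (frameSeg g '' B) = ⊤ := by
        rw [eq_top_iff, ← (Pi.basisFun ℂ (Fin n → Fin 4)).span_eq, Submodule.span_le]
        rintro _ ⟨f, rfl⟩
        simpa using hf f
      have h2 := finrank_span_le_card (R := ℂ) (frameSeg g '' B)
      rw [htop, finrank_top, Module.finrank_pi, ← Set.ncard_eq_toFinset_card'] at h2
      have h3 := Set.ncard_image_le (s := B) (f := frameSeg g) (Set.toFinite _)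
      simp only [Fintype.card_pi, Fintype.card_fin, Finset.prod_const, Finset.card_univ] at h2
      omega
    obtain ⟨f, hf⟩ := hspan
    refine ⟨Function.update g i fun j _ => Pi.single (f j) 1, ?_⟩
    have hfs : frameSeg (Function.update g i fun j _ => Pi.single (f j) 1) (i, 0)
        = Pi.single f 1 := by
      ext f'
      simp only [frameSeg, seg, Function.update_self, Pi.single_apply]
      rw [Finset.prod_ite_zero]
      simp [funext_iff]
    have hEq : Set.EqOn (frameSeg g)
        (frameSeg (Function.update g i fun j _ => Pi.single (f j) 1)) B := by
      intro z hz
      simp [frameSeg, Function.update_of_ne (hBi z hz)]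
    have hset : A ∪ {z | z.1 ∈ insert i T ∧ z.2 = 0} = insert (i, 0) B := by
      ext ⟨a, b⟩
      simp only [hB, Set.mem_union, Set.mem_ofPred_eq, Finset.mem_insert, Set.mem_insert_iff,
        Prod.mk.injEq]
      tauto
    rw [hset]
    refine (hg.congr hEq).insert ?_
    rw [hfs, ← Set.EqOn.image_eq hEq]
    exact hf

theorem FrameIndep.of_slices {n : ℕ} {ι : Type} [Finite ι] {A : Set (ι × (Fin (n + 1) → Fin 4))}
    (b : ι → Fin 4)
    (h : ∀ e, FrameIndep {z : ι × (Fin n → Fin 4) | (z.1, Fin.cons (e - b z.1) z.2) ∈ A}) :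
    FrameIndep A := by
  classical
  have := Fintype.ofFinite ι
  let P := ι × Fin n × Fin 4 × Fin 4
  let M : ι × (Fin n → Fin 4) → (Fin n → Fin 4) → MvPolynomial P ℂ :=
    frameSeg fun i j a b => MvPolynomial.X (i, j, a, b)
  have hM : ∀ (p : P → ℂ) z f, MvPolynomial.eval p (M z f)
      = frameSeg (fun i j a b => p (i, j, a, b)) z f := by
    intro p z f
    simp [M, frameSeg, seg]
  have h1 : ∀ e, ∃ d : MvPolynomial P ℂ, d ≠ 0 ∧ ∀ p, MvPolynomial.eval p d ≠ 0 →
      LinearIndepOn ℂ (frameSeg (fun i j a b => p (i, j, a, b)))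
        {z : ι × (Fin n → Fin 4) | (z.1, Fin.cons (e - b z.1) z.2) ∈ A} := by
    intro e
    obtain ⟨g, hg⟩ := h e
    obtain ⟨d, hd, hd'⟩ := exists_forall_linearIndepOn M
      {z : ι × (Fin n → Fin 4) | (z.1, Fin.cons (e - b z.1) z.2) ∈ A}
      (fun q => g q.1 q.2.1 q.2.2.1 q.2.2.2) (by
        simp only [hM]
        exact hg)
    refine ⟨d, fun h0 => hd (by simp [h0]), fun p hp => ?_⟩
    have := hd' ℂ (MvPolynomial.eval p) hp
    simp only [hM] at this
    exact this
  choose d hd hd' using h1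
  have hprod : ∏ e, d e ≠ 0 := Finset.prod_ne_zero_iff.2 fun e _ => hd e
  obtain ⟨p, hp⟩ : ∃ p, MvPolynomial.eval p (∏ e, d e) ≠ 0 := by
    by_contra! h0
    exact hprod (MvPolynomial.funext fun p => by rw [h0 p, map_zero])
  rw [map_prod, Finset.prod_ne_zero_iff] at hp
  set g : ι → Fin n → Fin 4 → Fin 4 → ℂ := fun i j a b => p (i, j, a, b) with hg
  refine ⟨fun i => Fin.cons (fun c => Pi.single (b i + c) 1) (g i), ?_⟩
  rw [linearIndepOn_iff_fintype]
  intro l hl h0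
  have key : ∀ e, (fun z : ι × (Fin n → Fin 4) => l (z.1, Fin.cons (e - b z.1) z.2)) = 0 := by
    intro e
    refine linearIndepOn_iff_fintype.1 (hd' e p (hp e (Finset.mem_univ e))) _
      (fun z hz => hl _ hz) ?_
    ext f
    have h1 := congrFun h0 (Fin.cons e f)
    simp only [Fintype.sum_prod_type, Finset.sum_apply, Pi.smul_apply, Pi.zero_apply] at h1 ⊢
    rw [← h1]
    refine Finset.sum_congr rfl fun i _ => ?_
    rw [← (Fin.consEquiv (fun _ : Fin (n + 1) => Fin 4)).sum_comp, Fintype.sum_prod_type,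
      Finset.sum_eq_single (e - b i)]
    · refine Finset.sum_congr rfl fun c _ => ?_
      simp [Fin.consEquiv, frameSeg, seg, Fin.prod_univ_succ, hg]
    · intro c0 _ hc0
      refine Finset.sum_eq_zero fun c _ => ?_
      have : e ≠ b i + c0 := by
        rintro rfl
        exact hc0 (by simp)
      simp [Fin.consEquiv, frameSeg, seg, Fin.prod_univ_succ, this]
    · simp
  ext ⟨i, c⟩
  have := congrFun (key (b i + c 0)) (i, Fin.tail c)
  simpa using this

theorem hammingNorm_cons {n : ℕ} (a : Fin 4) (c : Fin n → Fin 4) :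
    hammingNorm (Fin.cons a c : Fin (n + 1) → Fin 4) = (if a = 0 then 0 else 1) + hammingNorm c := by
  unfold hammingNorm
  rw [Fin.card_filter_univ_succ]
  by_cases h : a = 0 <;> simp [h, add_comm]

theorem hammingNorm_comp_perm {n : ℕ} (c : Fin n → Fin 4) (σ : Equiv.Perm (Fin n)) :
    hammingNorm (c ∘ σ) = hammingNorm c := by
  unfold hammingNorm
  refine Finset.card_bij (fun i _ => σ i) ?_ ?_ ?_
  · simp
  · simp
  · intro j hj
    exact ⟨σ.symm j, by simpa using hj, by simp⟩

theorem exists_eq_single_of_hammingNorm_le_one {n : ℕ} [NeZero n] {c : Fin n → Fin 4}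
    (h : hammingNorm c ≤ 1) : ∃ j, c = Pi.single j (c j) := by
  by_cases h0 : c = 0
  · exact ⟨0, by simp [h0]⟩
  · obtain ⟨j, hj⟩ := Function.ne_iff.1 h0
    refine ⟨j, funext fun l => ?_⟩
    by_cases hl : l = j
    · subst hl; simp
    · rw [Pi.single_eq_of_ne hl]
      by_contra hcl
      unfold hammingNorm at h
      exact hl (Finset.card_le_one.1 h l (by simpa using hcl) j (by simpa using hj))

theorem hammingNorm_single_le {n : ℕ} (j : Fin n) (a : Fin 4) :
    hammingNorm (Pi.single j a : Fin n → Fin 4) ≤ 1 := by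
  unfold hammingNorm
  rw [Finset.card_le_one]
  intro l hl l' hl'
  have : ∀ l, (Pi.single j a : Fin n → Fin 4) l ≠ 0 → l = j := fun l hl => by
    by_contra h
    exact hl (by rw [Pi.single_eq_of_ne h])
  rw [this l (by simpa using hl), this l' (by simpa using hl')]

theorem ncard_hammingNorm_le_one_le (n : ℕ) :
    {c : Fin n → Fin 4 | hammingNorm c ≤ 1}.ncard ≤ 3 * n + 1 := by
  classical
  have hsub : {c : Fin n → Fin 4 | hammingNorm c ≤ 1} ⊆ ((insert 0 (Finset.univ.image
      fun p : Fin n × Fin 3 => Pi.single p.1 p.2.succ) : Finset (Fin n → Fin 4)) : Set _) := by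
    intro c hc
    by_cases h0 : c = 0
    · simp [h0]
    · obtain ⟨j, -⟩ := Function.ne_iff.1 h0
      have : NeZero n := ⟨fun h => by subst h; exact j.elim0⟩
      obtain ⟨j, hj⟩ := exists_eq_single_of_hammingNorm_le_one hc
      have hcj : c j ≠ 0 := fun h => h0 (by rw [hj, h, Pi.single_zero])
      obtain ⟨a, ha⟩ := Fin.exists_succ_eq.2 hcj
      simp only [Finset.coe_insert, Finset.coe_image, Finset.coe_univ, Set.image_univ,
        Set.mem_insert_iff, Set.mem_range]
      exact Or.inr ⟨(j, a), by rw [ha]; exact hj.symm⟩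
  refine (Set.ncard_le_ncard hsub).trans ?_
  rw [Set.ncard_coe_finset]
  refine (Finset.card_insert_le _ _).trans ?_
  have := Finset.card_image_le (s := Finset.univ)
    (f := fun p : Fin n × Fin 3 => (Pi.single p.1 p.2.succ : Fin n → Fin 4))
  simp only [Finset.card_univ, Fintype.card_prod, Fintype.card_fin] at this
  omega

/-- A block of the splitting: balls on the indices in `U`, single points elsewhere. -/
theorem FrameIndep.balls_and_points {n t s : ℕ}
    (h : FrameIndep {z : Fin t × (Fin n → Fin 4) | hammingNorm z.2 ≤ 1})
    (U : Finset (Fin s)) (ψ : Fin s → Fin t) (hψ : Set.InjOn ψ U)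
    (hc : 3 * n * t + s ≤ 4 ^ n) :
    FrameIndep {z : Fin s × (Fin n → Fin 4) | hammingNorm z.2 ≤ 1 ∧ (z.1 ∈ U ∨ z.2 = 0)} := by
  have h1 : FrameIndep {z : Fin s × (Fin n → Fin 4) | z.1 ∈ U ∧ hammingNorm z.2 ≤ 1} := by
    refine h.transport ψ (Equiv.refl _) (fun z hz => hz.2) (fun z hz w hw => hψ hz.1 hw.1)
  have hU : U.card ≤ t := by
    simpa using Finset.card_le_card_of_injOn ψ (t := Finset.univ) (by simp) hψ
  have hUs : U.card + Uᶜ.card = s := by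
    simp
  have hcard : {z : Fin s × (Fin n → Fin 4) | z.1 ∈ U ∧ hammingNorm z.2 ≤ 1}.ncard
      ≤ U.card * (3 * n + 1) := by
    have : {z : Fin s × (Fin n → Fin 4) | z.1 ∈ U ∧ hammingNorm z.2 ≤ 1}
        = (U : Set (Fin s)) ×ˢ {c | hammingNorm c ≤ 1} := rfl
    rw [this, Set.ncard_prod, Set.ncard_coe_finset]
    exact Nat.mul_le_mul_left _ (ncard_hammingNorm_le_one_le n)
  refine (h1.union_points Uᶜ (fun z hz => by simpa using hz.1) ?_).mono ?_
  · have := Nat.mul_le_mul_left (3 * n) hU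
    nlinarith
  · rintro ⟨i, c⟩ ⟨h1, h2⟩
    by_cases hi : i ∈ U
    · exact Or.inl ⟨hi, h1⟩
    · exact Or.inr ⟨by simpa using hi, h2.resolve_left hi⟩

/-- A sufficient numerical condition for `t` general tangent spaces to be independent. -/
def Admissible : ℕ → ℕ → Prop
  | 0, t => t ≤ 1
  | n + 1, t => 3 * n * ((t + 3) / 4) + t ≤ 4 ^ n ∧ Admissible n ((t + 3) / 4)

theorem Admissible.frameIndep : ∀ {n t : ℕ}, Admissible n t →
    FrameIndep {z : Fin t × (Fin n → Fin 4) | hammingNorm z.2 ≤ 1}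
  | 0, t, h => by
    refine ⟨fun _ _ _ _ => 0, ?_⟩
    rw [linearIndepOn_iff_fintype]
    intro l _ h0
    have ht : Subsingleton (Fin t) := Fin.subsingleton_iff_le_one.2 h
    ext z
    have h1 := congrFun h0 z.2
    have : Unique (Fin t × (Fin 0 → Fin 4)) := uniqueOfSubsingleton z
    rw [Fintype.sum_unique] at h1
    simpa [frameSeg, seg, Subsingleton.elim (default : Fin t × (Fin 0 → Fin 4)) z] using h1
  | n + 1, t, h => by
    refine FrameIndep.of_slices (fun i => Fin.ofNat 4 i) fun e => ?_
    refine (h.2.frameIndep.balls_and_points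
      (Finset.univ.filter fun i : Fin t => Fin.ofNat 4 i = e)
      (fun i => ⟨i / 4, by have := i.2; omega⟩) ?_ h.1).mono ?_
    · intro i hi i' hi' hii
      simp only [Finset.coe_filter, Finset.mem_univ, true_and, Set.mem_ofPred_eq] at hi hi'
      have h1 := congrArg Fin.val (hi.trans hi'.symm)
      simp only [Fin.val_ofNat] at h1
      simp only [Fin.mk.injEq] at hii
      ext
      omega
    · rintro ⟨i, c⟩ hz
      simp only [Set.mem_ofPred_eq, hammingNorm_cons] at hz
      simp only [Set.mem_ofPred_eq, Finset.mem_filter, Finset.mem_univ, true_and]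
      refine ⟨by omega, ?_⟩
      by_cases h0 : e - Fin.ofNat 4 i = 0
      · exact Or.inl (sub_eq_zero.1 h0).symm
      · rw [if_neg h0] at hz
        exact Or.inr (hammingNorm_eq_zero.1 (by omega))

theorem FrameIndep.balls_and_extra {n m : ℕ} (h : Admissible n ((m + 1) / 4 + 1))
    (hc : 3 * n * ((m + 1) / 4 + 1) + (m + 1) ≤ 4 ^ n) :
    FrameIndep {z : Fin (m + 1) × (Fin (n + 1) → Fin 4) | hammingNorm z.2 ≤ 1 ∨
      (z.1 = Fin.last m ∧ z.2 0 = 1 ∧ hammingNorm z.2 ≤ 2)} := by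
  refine FrameIndep.of_slices (fun i => Fin.ofNat 4 i) fun e => ?_
  refine (h.frameIndep.balls_and_points
    (Finset.univ.filter fun i : Fin (m + 1) => Fin.ofNat 4 i = e ∨
      (i = Fin.last m ∧ Fin.ofNat 4 (m + 1) = e))
    (fun i => if i = Fin.last m ∧ Fin.ofNat 4 (m + 1) = e then ⟨(m + 1) / 4, by omega⟩
      else ⟨i / 4, by have := i.2; omega⟩) ?_ hc).mono ?_
  · intro i hi i' hi' hii
    simp only [Finset.coe_filter, Finset.mem_univ, true_and, Set.mem_ofPred_eq, Fin.ext_iff,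
      Fin.val_ofNat, Fin.val_last] at hi hi' hii ⊢
    have := i.2
    have := i'.2
    split_ifs at hii with h1 h2 h2 <;> simp only [] at hii <;> omega
  · rintro ⟨i, c⟩ hz
    simp only [Set.mem_ofPred_eq, hammingNorm_cons, Fin.cons_zero] at hz
    simp only [Set.mem_ofPred_eq, Finset.mem_filter, Finset.mem_univ, true_and]
    by_cases h0 : e - Fin.ofNat 4 i = 0
    · rw [h0] at hz
      simp only [if_true, zero_ne_one, false_and, and_false, or_false] at hz
      exact ⟨by omega, Or.inl (Or.inl (sub_eq_zero.1 h0).symm)⟩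
    · rw [if_neg h0] at hz
      rcases hz with hz | ⟨hz1, hz2, hz3⟩
      · exact ⟨by omega, Or.inr (hammingNorm_eq_zero.1 (by omega))⟩
      · refine ⟨by omega, Or.inl (Or.inr ⟨hz1, ?_⟩)⟩
        rw [sub_eq_iff_eq_add] at hz2
        rw [hz2, hz1, Fin.val_last]
        ext
        simp only [Fin.val_ofNat, Fin.val_add, Fin.val_one]
        omega

theorem add_mul_le_four_pow {n : ℕ} (hn : 5 ≤ n) : 14 * n * n + 27 * n + 18 ≤ 4 ^ (n + 1) := by
  induction n, hn using Nat.le_induction with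
  | base => norm_num
  | succ n hn ih =>
    rw [pow_succ]
    nlinarith

theorem admissible_of_mul_le {n : ℕ} (hn : 5 ≤ n) :
    ∀ {t : ℕ}, t * (3 * n + 3) ≤ 4 ^ n → Admissible n t := by
  induction n, hn using Nat.le_induction with
  | base =>
    intro t ht
    simp only [Admissible]
    omega
  | succ n hn ih =>
    intro t ht
    have h1 := add_mul_le_four_pow hn
    have h2 : 4 * ((t + 3) / 4) ≤ t + 3 := Nat.mul_div_le _ _
    have h3 : 4 ^ (n + 1) = 4 * 4 ^ n := pow_succ' _ _
    refine ⟨?_, ih ?_⟩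
    · have h4 := Nat.mul_le_mul_left (3 * n) h2
      by_cases h5 : 9 * n ≤ 2 * t
      · nlinarith
      · have h6 : 2 * t ≤ 9 * n := by omega
        have h7 := Nat.mul_le_mul_left (3 * n + 4) h6
        nlinarith
    · have h4 := Nat.mul_le_mul_left (3 * n + 3) h2
      by_cases h5 : 3 * n + 3 ≤ t
      · nlinarith
      · have h6 : t ≤ 3 * n + 3 := by omega
        have h7 := Nat.mul_le_mul_left (3 * n + 3) h6
        nlinarith

theorem twelve_mul_le_four_pow {n : ℕ} (hn : 5 ≤ n) : 12 * n ≤ 4 ^ (n - 2) := by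
  induction n, hn using Nat.le_induction with
  | base => norm_num
  | succ n hn ih =>
    rw [show n + 1 - 2 = n - 2 + 1 by omega, pow_succ]
    omega

theorem admissible_of_bound {n k : ℕ} (hn : 4 ≤ n) (h : k * (3 * n + 4) ≤ 63 * 4 ^ (n - 2)) :
    Admissible n (k / 4 + 1) ∧ 3 * n * (k / 4 + 1) + k ≤ 4 ^ n := by
  rcases hn.eq_or_lt with rfl | hn
  · simp only [Admissible]
    omega
  · have h1 := twelve_mul_le_four_pow (show 5 ≤ n from hn)
    have h2 : 4 * (k / 4) ≤ k := Nat.mul_div_le _ _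
    have h3 : 4 ^ n = 16 * 4 ^ (n - 2) := by
      conv_lhs => rw [show n = n - 2 + 2 by omega, pow_add]
      ring
    refine ⟨admissible_of_mul_le hn ?_, ?_⟩
    · rw [h3]
      have h4 := Nat.mul_le_mul_left (3 * n + 3) h2
      by_cases hk : k ≤ 12
      · have h6 : k / 4 ≤ 3 := by omega
        have h7 := Nat.mul_le_mul_right (3 * n + 3) h6
        nlinarith
      · nlinarith
    · rw [h3]
      have h4 := Nat.mul_le_mul_left (3 * n) h2
      nlinarith

theorem frameIndep_special {n k : ℕ} (hn : 5 ≤ n) (h : k * (3 * n + 1) ≤ 63 * 4 ^ (n - 3))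
    (i₀ : Fin k) (j : Fin n) :
    FrameIndep {z : Fin k × (Fin n → Fin 4) | hammingNorm z.2 ≤ 1 ∨
      (z.1 = i₀ ∧ z.2 j = 1 ∧ hammingNorm z.2 ≤ 2)} := by
  obtain ⟨n, rfl⟩ : ∃ n', n = n' + 1 := ⟨n - 1, by omega⟩
  obtain ⟨m, rfl⟩ : ∃ m, k = m + 1 := ⟨k - 1, by have := i₀.2; omega⟩
  obtain ⟨h1, h2⟩ := admissible_of_bound (n := n) (k := m + 1) (by omega) h
  refine (FrameIndep.balls_and_extra h1 h2).transport (Equiv.swap i₀ (Fin.last m))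
    (Equiv.swap 0 j) ?_ (fun z _ w _ hzw => (Equiv.swap i₀ (Fin.last m)).injective hzw)
  rintro ⟨i, c⟩ (hz | ⟨hz1, hz2, hz3⟩)
  · exact Or.inl (by rw [hammingNorm_comp_perm]; exact hz)
  · refine Or.inr ⟨?_, ?_, ?_⟩
    · simp only at hz1
      simp [hz1]
    · simpa using hz2
    · rw [hammingNorm_comp_perm]; exact hz3

section Uniqueness

open Module

variable {n : ℕ} {ι L : Type} [Field L]

theorem Derivation.map_prod_eq_sum_update {ι L : Type} [DecidableEq ι] [Field L]
    (D : Derivation ℤ L L) (a : ι → L) (s : Finset ι) :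
    D (∏ j ∈ s, a j) = ∑ j ∈ s, ∏ l ∈ s, Function.update a j (D (a j)) l := by
  induction s using Finset.induction_on with
  | empty => simp
  | insert i s hi ih =>
    rw [Finset.prod_insert hi, D.leibniz, ih, Finset.sum_insert hi, Finset.prod_insert hi,
      Function.update_self, Finset.prod_update_of_notMem hi, Finset.smul_sum, smul_eq_mul, mul_comm,
      add_comm]
    congr 1
    refine Finset.sum_congr rfl fun j hj => ?_
    rw [Finset.prod_insert hi, Function.update_of_ne (by rintro rfl; exact hi hj), smul_eq_mul]

/-- The map `seg` as a multilinear map. -/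
def segMap (L : Type) [Field L] (n : ℕ) :
    MultilinearMap L (fun _ : Fin n => Fin 4 → L) ((Fin n → Fin 4) → L) :=
  MultilinearMap.pi fun f =>
    (MultilinearMap.mkPiAlgebra L (Fin n) L).compLinearMap fun j => LinearMap.proj (f j)

theorem segMap_apply (x : Fin n → Fin 4 → L) : segMap L n x = seg x := by
  ext f
  simp [segMap, seg]

/-- The decomposable tensor `seg x` as a linear function of its factor in position `j`. -/
def segAt (x : Fin n → Fin 4 → L) (j : Fin n) : (Fin 4 → L) →ₗ[L] ((Fin n → Fin 4) → L) :=
  (segMap L n).toLinearMap x j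

theorem segAt_apply (x : Fin n → Fin 4 → L) (j : Fin n) (u : Fin 4 → L) :
    segAt x j u = seg (Function.update x j u) :=
  segMap_apply _

theorem segAt_self (x : Fin n → Fin 4 → L) (j : Fin n) : segAt x j (x j) = seg x := by
  rw [segAt_apply, Function.update_eq_self]

theorem derivation_seg (D : Derivation ℤ L L) (x : Fin n → Fin 4 → L) :
    (D ∘ seg x) = ∑ j, segAt x j (D ∘ x j) := by
  ext f
  simp only [Function.comp_apply, Finset.sum_apply, segAt_apply, seg,
    D.map_prod_eq_sum_update]
  refine Finset.sum_congr rfl fun j _ => Finset.prod_congr rfl fun l _ => ?_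
  by_cases h : l = j
  · subst h; simp
  · simp [h]

theorem derivation_segAt (D : Derivation ℤ L L) (x : Fin n → Fin 4 → L) (j : Fin n)
    (u : Fin 4 → L) :
    (D ∘ segAt x j u) = segAt x j (D ∘ u) +
      ∑ l ∈ Finset.univ.erase j, segAt (Function.update x j u) l (D ∘ x l) := by
  rw [segAt_apply, derivation_seg, ← Finset.add_sum_erase _ _ (Finset.mem_univ j)]
  congr 1
  · rw [Function.update_self, segAt_apply, segAt_apply, Function.update_idem]
  · refine Finset.sum_congr rfl fun l hl => ?_
    rw [Function.update_of_ne (Finset.ne_of_mem_erase hl)]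

theorem derivation_sum_comp {κ α : Type} (D : Derivation ℤ L L) (A : Finset α) (s : α → κ → L) :
    D ∘ (∑ i ∈ A, s i) = ∑ i ∈ A, D ∘ s i := by
  ext; simp

theorem derivation_smul_comp {κ : Type} (D : Derivation ℤ L L) (a : L) (t : κ → L) :
    D ∘ (a • t) = a • (D ∘ t) + D a • t := by
  ext f
  simp [D.leibniz, mul_comm]

theorem frameSeg_zero (g : ι → Fin n → Fin 4 → Fin 4 → L) (i : ι) :
    frameSeg g (i, 0) = seg fun l => g i l 0 := rfl

theorem frameSeg_single (g : ι → Fin n → Fin 4 → Fin 4 → L) (i : ι) (j : Fin n) (a : Fin 4) :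
    frameSeg g (i, Pi.single j a) = segAt (fun l => g i l 0) j (g i j a) := by
  rw [segAt_apply, frameSeg]
  congr 1
  ext1 l
  by_cases h : l = j
  · subst h; simp
  · simp [h]

theorem frameSeg_update_single (g : ι → Fin n → Fin 4 → Fin 4 → L) (i : ι) {j l : Fin n}
    (a b : Fin 4) (hjl : l ≠ j) :
    frameSeg g (i, Function.update (Pi.single l a) j b)
      = segAt (Function.update (fun l => g i l 0) j (g i j b)) l (g i l a) := by
  rw [segAt_apply, frameSeg]
  congr 1
  ext1 m
  by_cases h : m = j
  · subst h; simp [hjl.symm]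
  · by_cases hml : m = l
    · subst hml; simp [h]
    · simp [h, hml]

/-- The differential of the sum of decomposable tensors with factors `x`. -/
def tanMap [Fintype ι] (x : ι → Fin n → Fin 4 → L) :
    (ι → Fin n → Fin 4 → L) →ₗ[L] ((Fin n → Fin 4) → L) :=
  ∑ i, ∑ j, segAt (x i) j ∘ₗ LinearMap.proj j ∘ₗ LinearMap.proj i

theorem tanMap_apply [Fintype ι] (x u : ι → Fin n → Fin 4 → L) :
    tanMap x u = ∑ i, ∑ j, segAt (x i) j (u i j) := by
  simp [tanMap]

theorem derivation_sum_seg [Fintype ι] (D : Derivation ℤ L L) (x : ι → Fin n → Fin 4 → L) :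
    D ∘ (∑ i, seg (x i)) = tanMap x fun i j => D ∘ x i j := by
  rw [derivation_sum_comp, tanMap_apply]
  exact Finset.sum_congr rfl fun i _ => derivation_seg D (x i)

theorem tanMap_single [Fintype ι] [DecidableEq ι] (x : ι → Fin n → Fin 4 → L) (i : ι) (j : Fin n)
    (u : Fin 4 → L) : tanMap x (Pi.single i (Pi.single j u)) = segAt (x i) j u := by
  rw [tanMap_apply, Finset.sum_eq_single i, Finset.sum_eq_single j]
  · simp
  · intro l _ hl
    simp [hl]
  · simp
  · intro l _ hl
    simp [hl]
  · simp

theorem segAt_mem_range [Fintype ι] (x : ι → Fin n → Fin 4 → L) (i : ι) (j : Fin n)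
    (u : Fin 4 → L) : segAt (x i) j u ∈ LinearMap.range (tanMap x) := by
  classical
  exact ⟨_, tanMap_single x i j u⟩

theorem seg_mem_range [Fintype ι] [NeZero n] (x : ι → Fin n → Fin 4 → L) (i : ι) :
    seg (x i) ∈ LinearMap.range (tanMap x) := by
  rw [← segAt_self (x i) 0]
  exact segAt_mem_range x i 0 _

/-- The sum of the tangent spaces at the points `x` is spanned by the products of frame vectors
with at most one vector different from the base point. -/
theorem range_tanMap [Fintype ι] [NeZero n] (x : ι → Fin n → Fin 4 → L)
    (b : ι → Fin n → Basis (Fin 4) L (Fin 4 → L)) (hb : ∀ i j, b i j 0 = x i j) :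
    LinearMap.range (tanMap x) = Submodule.span L
      (frameSeg (fun i j => ⇑(b i j)) '' {z | hammingNorm z.2 ≤ 1}) := by
  have hx : ∀ i, (fun l => b i l 0) = x i := fun i => funext (hb i)
  apply le_antisymm
  · rintro _ ⟨u, rfl⟩
    rw [tanMap_apply]
    refine Submodule.sum_mem _ fun i _ => Submodule.sum_mem _ fun j _ => ?_
    rw [← (b i j).sum_repr (u i j), map_sum]
    refine Submodule.sum_mem _ fun a _ => ?_
    rw [map_smul]
    refine Submodule.smul_mem _ _ (Submodule.subset_span ⟨(i, Pi.single j a), ?_, ?_⟩)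
    · exact hammingNorm_single_le j a
    · rw [frameSeg_single, hx]
  · rw [Submodule.span_le]
    rintro _ ⟨⟨i, c⟩, hc, rfl⟩
    obtain ⟨j, hj⟩ := exists_eq_single_of_hammingNorm_le_one hc
    simp only at hj
    rw [hj, frameSeg_single, hx]
    exact segAt_mem_range x i j _

theorem exists_basis_of_linearIndepOn (g : ι → Fin n → Fin 4 → Fin 4 → L)
    (h : LinearIndepOn L (frameSeg g) {z | hammingNorm z.2 ≤ 1}) :
    ∃ b : ι → Fin n → Basis (Fin 4) L (Fin 4 → L), (fun i j => ⇑(b i j)) = g := by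
  have hli : ∀ i j, LinearIndependent L (g i j) := by
    intro i j
    have h1 := LinearIndependent.comp h
      (fun a : Fin 4 => ⟨(i, Pi.single j a), hammingNorm_single_le j a⟩) (by
        intro a a' haa
        simpa using haa)
    refine LinearIndependent.of_comp (segAt (fun l => g i l 0) j) ?_
    convert h1 using 1
    ext1 a
    exact (frameSeg_single g i j a).symm
  exact ⟨fun i j => basisOfLinearIndependentOfCardEqFinrank (hli i j) (by simp), by simp⟩

theorem exists_basis_of_ne_zero {v : Fin 4 → L} (hv : v ≠ 0) :
    ∃ b : Basis (Fin 4) L (Fin 4 → L), b 0 = v := by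
  have h1 : LinearIndependent L ![v] := LinearIndependent.of_subsingleton 0 hv
  obtain ⟨x, h2⟩ := exists_linearIndependent_snoc_of_lt_finrank h1 (by simp)
  obtain ⟨y, h3⟩ := exists_linearIndependent_snoc_of_lt_finrank h2 (by simp)
  obtain ⟨z, h4⟩ := exists_linearIndependent_snoc_of_lt_finrank h3 (by simp)
  refine ⟨basisOfLinearIndependentOfCardEqFinrank h4 (by simp), ?_⟩
  rw [coe_basisOfLinearIndependentOfCardEqFinrank]
  rfl

theorem LinearIndepOn.exists_dual {ζ V : Type} [AddCommGroup V] [Module L V] {v : ζ → V}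
    {A : Set ζ} (h : LinearIndepOn L v A) {z : ζ} (hz : z ∈ A) :
    ∃ φ : V →ₗ[L] L, φ (v z) = 1 ∧ ∀ w ∈ A, w ≠ z → φ (v w) = 0 := by
  obtain ⟨φ, h1, h2⟩ := Submodule.exists_le_ker_of_notMem (linearIndepOn_iff_notMem_span.1 h z hz)
  refine ⟨(φ (v z))⁻¹ • φ, by simp [h1], fun w hw hwz => ?_⟩
  have : φ (v w) = 0 := h2 (Submodule.subset_span ⟨w, ⟨hw, hwz⟩, rfl⟩)
  simp [this]

theorem Module.Basis.eq_smul_of_repr_eq_zero {v w : Fin 4 → L}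
    (b : Basis (Fin 4) L (Fin 4 → L)) (hb : b 0 = v) (h : ∀ a, a ≠ 0 → b.repr w a = 0) :
    ∃ c : L, w = c • v := by
  refine ⟨b.repr w 0, ?_⟩
  conv_lhs => rw [← b.sum_repr w]
  rw [Finset.sum_eq_single 0 (fun a _ ha => by rw [h a ha, zero_smul]) (by simp), hb]

/-- If the tangent spaces at the points `x` are independent, then a tangent vector in the direction
`w` that lies in the span of the points only rescales the factors. -/
theorem exists_eq_smul_of_tanMap_eq [Fintype ι] [NeZero n] {x : ι → Fin n → Fin 4 → L}
    (b : ι → Fin n → Basis (Fin 4) L (Fin 4 → L)) (hb : ∀ i j, b i j 0 = x i j)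
    (h : LinearIndepOn L (frameSeg fun i j => ⇑(b i j)) {z | hammingNorm z.2 ≤ 1})
    (w : ι → Fin n → Fin 4 → L) (i₀ : ι) (hw : tanMap x w = seg (x i₀)) (i : ι) (j : Fin n) :
    ∃ c : L, w i j = c • x i j := by
  classical
  have hx : ∀ i, (fun l => b i l 0) = x i := fun i => funext (hb i)
  refine (b i j).eq_smul_of_repr_eq_zero (hb i j) fun a ha => ?_
  obtain ⟨φ, h1, h2⟩ := h.exists_dual (z := (i, Pi.single j a)) (hammingNorm_single_le j a)
  have h3 := congrArg φ hw
  have hval : ∀ i' j' u, φ (segAt (x i') j' u)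
      = if i' = i ∧ j' = j then (b i j).repr u a else 0 := by
    intro i' j' u
    conv_lhs => rw [← (b i' j').sum_repr u]
    rw [map_sum, map_sum]
    simp only [map_smul, ← hx i', ← frameSeg_single (fun i j => ⇑(b i j))]
    split_ifs with hij
    · obtain ⟨rfl, rfl⟩ := hij
      rw [Finset.sum_eq_single a, h1, smul_eq_mul, mul_one]
      · intro a' _ ha'
        rw [h2 _ (hammingNorm_single_le _ _) (by simpa using ha'), smul_zero]
      · simp
    · refine Finset.sum_eq_zero fun a' _ => ?_
      rw [h2 _ (hammingNorm_single_le _ _), smul_zero]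
      intro heq
      obtain ⟨h4, h5⟩ := Prod.mk.inj heq
      refine hij ⟨h4, ?_⟩
      by_contra hj
      have := congrFun h5 j
      rw [Pi.single_eq_same, Pi.single_eq_of_ne (Ne.symm hj)] at this
      exact ha this.symm
  have h0 : φ (seg (x i₀)) = 0 := by
    rw [← hx i₀, ← frameSeg_zero (fun i j => ⇑(b i j))]
    refine h2 _ (by simp) fun heq => ?_
    have := congrFun (Prod.mk.inj heq).2 j
    simp at this
    exact ha this.symm
  rw [h0, tanMap_apply, map_sum] at h3
  simp only [map_sum, hval] at h3
  rw [Finset.sum_eq_single i, Finset.sum_eq_single j] at h3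
  · simpa using h3
  · intro l _ hl
    simp [hl]
  · simp
  · intro l _ hl
    simp [hl]
  · simp

theorem exists_eq_smul_of_sum_mem_range [Fintype ι] [NeZero n] {x : ι → Fin n → Fin 4 → L}
    (b : ι → Fin n → Basis (Fin 4) L (Fin 4 → L)) (hb : ∀ i j, b i j 0 = x i j) (i : ι) (j : Fin n)
    (h : LinearIndepOn L (frameSeg fun i j => ⇑(b i j))
      {z | hammingNorm z.2 ≤ 1 ∨ (z.1 = i ∧ z.2 j = 1 ∧ hammingNorm z.2 ≤ 2)})
    (w : Fin n → Fin 4 → L)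
    (hw : ∑ l ∈ Finset.univ.erase j, segAt (Function.update (x i) j (b i j 1)) l (w l)
      ∈ LinearMap.range (tanMap x)) (l : Fin n) (hl : l ≠ j) :
    ∃ c : L, w l = c • x i l := by
  classical
  have hx : ∀ i, (fun l => b i l 0) = x i := fun i => funext (hb i)
  refine (b i l).eq_smul_of_repr_eq_zero (hb i l) fun a ha => ?_
  have hmem : ∀ (l' : Fin n) (a' : Fin 4), l' ≠ j →
      hammingNorm (Function.update (Pi.single l' a') j 1 : Fin n → Fin 4) ≤ 2 := by
    intro l' a' hl'
    unfold hammingNorm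
    refine (Finset.card_le_card (t := {l', j}) fun m hm => ?_).trans Finset.card_le_two
    simp only [Finset.mem_filter, Finset.mem_univ, true_and] at hm
    by_contra hm'
    simp only [Finset.mem_insert, Finset.mem_singleton, not_or] at hm'
    simp [hm'.1, hm'.2] at hm
  have hmem' : ∀ (l' : Fin n) (a' : Fin 4), l' ≠ j →
      (i, (Function.update (Pi.single l' a') j 1 : Fin n → Fin 4)) ∈
      {z : ι × (Fin n → Fin 4) | hammingNorm z.2 ≤ 1 ∨ (z.1 = i ∧ z.2 j = 1 ∧ hammingNorm z.2 ≤ 2)} :=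
    fun l' a' hl' => Or.inr ⟨rfl, by simp, hmem l' a' hl'⟩
  obtain ⟨φ, h1, h2⟩ := h.exists_dual (z := (i, Function.update (Pi.single l a) j 1))
    (hmem' l a hl)
  have h0 : φ (∑ l ∈ Finset.univ.erase j,
      segAt (Function.update (x i) j (b i j 1)) l (w l)) = 0 := by
    have hle : LinearMap.range (tanMap x) ≤ LinearMap.ker φ := by
      rw [range_tanMap x b hb, Submodule.span_le]
      rintro _ ⟨z, hz, rfl⟩
      refine h2 z (Or.inl hz) ?_
      rintro rfl
      obtain ⟨m, hm⟩ := exists_eq_single_of_hammingNorm_le_one hz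
      simp only at hm
      have e1 := congrFun hm l
      have e2 := congrFun hm j
      rw [Function.update_of_ne hl, Pi.single_eq_same] at e1
      rw [Function.update_self] at e2
      have : l = m := by
        by_contra hlm
        rw [Pi.single_eq_of_ne hlm] at e1
        exact ha e1
      subst this
      rw [Pi.single_eq_of_ne hl.symm] at e2
      exact one_ne_zero e2
    exact hle hw
  have hval : ∀ l' u, l' ≠ j → φ (segAt (Function.update (x i) j (b i j 1)) l' u)
      = if l' = l then (b i l).repr u a else 0 := by
    intro l' u hl'
    conv_lhs => rw [← (b i l').sum_repr u]
    rw [map_sum, map_sum]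
    simp only [map_smul, ← hx i, ← frameSeg_update_single (fun i j => ⇑(b i j)) i _ 1 hl']
    split_ifs with hij
    · subst hij
      rw [Finset.sum_eq_single a, h1, smul_eq_mul, mul_one]
      · intro a' _ ha'
        rw [h2 _ (hmem' _ _ hl'), smul_zero]
        intro heq
        have := congrFun (Prod.mk.inj heq).2 l'
        simp [hl'] at this
        exact ha' this
      · simp
    · refine Finset.sum_eq_zero fun a' _ => ?_
      rw [h2 _ (hmem' _ _ hl'), smul_zero]
      intro heq
      have := congrFun (Prod.mk.inj heq).2 l
      simp [hl, Ne.symm hij] at this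
      exact ha this.symm
  rw [map_sum, Finset.sum_congr rfl
    (fun l' hl' => hval l' (w l') (Finset.ne_of_mem_erase hl')), Finset.sum_ite_eq',
    if_pos (by simp [hl])] at h0
  exact h0

theorem range_tanMap_le_of_sum_seg_eq [Fintype ι] {x y : ι → Fin n → Fin 4 → L}
    (hD : ∀ u : ι → Fin n → Fin 4 → L, ∃ D : Derivation ℤ L L, ∀ i j, D ∘ x i j = u i j)
    (hxy : ∑ i, seg (x i) = ∑ i, seg (y i)) :
    LinearMap.range (tanMap x) ≤ LinearMap.range (tanMap y) := by
  rintro _ ⟨u, rfl⟩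
  obtain ⟨D, hDu⟩ := hD u
  refine ⟨fun i j => D ∘ y i j, ?_⟩
  rw [← derivation_sum_seg, ← hxy, derivation_sum_seg]
  simp only [hDu]

theorem linearIndepOn_of_range_tanMap_le [Fintype ι] [NeZero n] {x y : ι → Fin n → Fin 4 → L}
    (b c : ι → Fin n → Basis (Fin 4) L (Fin 4 → L)) (hb : ∀ i j, b i j 0 = x i j)
    (hc : ∀ i j, c i j 0 = y i j)
    (h : LinearIndepOn L (frameSeg fun i j => ⇑(b i j)) {z | hammingNorm z.2 ≤ 1})
    (hle : LinearMap.range (tanMap x) ≤ LinearMap.range (tanMap y)) :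
    LinearMap.range (tanMap x) = LinearMap.range (tanMap y) ∧
      LinearIndepOn L (frameSeg fun i j => ⇑(c i j)) {z | hammingNorm z.2 ≤ 1} := by
  classical
  set A : Set (ι × (Fin n → Fin 4)) := {z | hammingNorm z.2 ≤ 1} with hA
  have := Fintype.ofFinite A
  have h1 : finrank L (LinearMap.range (tanMap x)) = Fintype.card A := by
    rw [range_tanMap x b hb, Set.image_eq_range]
    exact finrank_span_eq_card h
  have h2 : finrank L (LinearMap.range (tanMap y)) ≤ Fintype.card A := by
    rw [range_tanMap y c hc, Set.image_eq_range]
    exact finrank_range_le_card _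
  refine ⟨Submodule.eq_of_le_of_finrank_le hle (by omega), ?_⟩
  refine linearIndependent_iff_card_le_finrank_span.2 ?_
  rw [← h1]
  refine (Submodule.finrank_mono hle).trans ?_
  rw [range_tanMap y c hc, Set.image_eq_range]
  exact le_rfl

theorem derivation_mem_range_tanMap [Fintype ι] {y : ι → Fin n → Fin 4 → L}
    (D : Derivation ℤ L L) (hy : ∀ i j, ∃ c : L, D ∘ y i j = c • y i j) {t : (Fin n → Fin 4) → L}
    (ht : t ∈ LinearMap.range (tanMap y)) : D ∘ t ∈ LinearMap.range (tanMap y) := by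
  obtain ⟨u, rfl⟩ := ht
  rw [tanMap_apply, derivation_sum_comp]
  refine Submodule.sum_mem _ fun i _ => ?_
  rw [derivation_sum_comp]
  refine Submodule.sum_mem _ fun j _ => ?_
  rw [derivation_segAt]
  refine Submodule.add_mem _ (segAt_mem_range y i j _) (Submodule.sum_mem _ fun l hl => ?_)
  obtain ⟨c, hc⟩ := hy i l
  have hlj := Finset.ne_of_mem_erase hl
  rw [hc, map_smul, show y i l = Function.update (y i) j (u i j) l by
    rw [Function.update_of_ne hlj], segAt_self, ← segAt_apply]
  exact Submodule.smul_mem _ _ (segAt_mem_range y i j _)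

/-- Every point of another decomposition of a generic sum lies in the span of the given points. -/
theorem exists_seg_eq_sum_smul [Fintype ι] [NeZero n] (hn : 2 ≤ n) {x y : ι → Fin n → Fin 4 → L}
    (hD : ∀ u : ι → Fin n → Fin 4 → L, ∃ D : Derivation ℤ L L, ∀ i j, D ∘ x i j = u i j)
    (hS : ∀ i j, ∃ b : ι → Fin n → Basis (Fin 4) L (Fin 4 → L), (∀ i j, b i j 0 = x i j) ∧
      LinearIndepOn L (frameSeg fun i j => ⇑(b i j))
        {z | hammingNorm z.2 ≤ 1 ∨ (z.1 = i ∧ z.2 j = 1 ∧ hammingNorm z.2 ≤ 2)})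
    (c : ι → Fin n → Basis (Fin 4) L (Fin 4 → L)) (hc : ∀ i j, c i j 0 = y i j)
    (hxy : ∑ i, seg (x i) = ∑ i, seg (y i))
    (hT : LinearMap.range (tanMap x) = LinearMap.range (tanMap y))
    (hli : LinearIndepOn L (frameSeg fun i j => ⇑(c i j)) {z | hammingNorm z.2 ≤ 1}) (m : ι) :
    ∃ a : ι → L, seg (y m) = ∑ i, a i • seg (x i) := by
  obtain ⟨u, hu⟩ : seg (y m) ∈ LinearMap.range (tanMap x) := hT ▸ seg_mem_range y m
  obtain ⟨D, hDu⟩ := hD u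
  have h1 : tanMap y (fun i j => D ∘ y i j) = seg (y m) := by
    rw [← derivation_sum_seg, ← hxy, derivation_sum_seg, ← hu]
    simp only [hDu]
  have h2 : ∀ i j, ∃ a : L, D ∘ y i j = a • y i j :=
    exists_eq_smul_of_tanMap_eq c hc hli (fun i j => D ∘ y i j) m h1
  have h3 : ∀ i j l, l ≠ j → ∃ a : L, u i l = a • x i l := by
    intro i j l hlj
    obtain ⟨b, hb, hbli⟩ := hS i j
    refine exists_eq_smul_of_sum_mem_range b hb i j hbli (u i) ?_ l hlj
    have h4 : D ∘ segAt (x i) j (b i j 1) ∈ LinearMap.range (tanMap x) := by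
      rw [hT]
      exact derivation_mem_range_tanMap D h2 (hT ▸ segAt_mem_range x i j _)
    rw [derivation_segAt] at h4
    simp only [hDu] at h4
    exact (Submodule.add_mem_iff_right _ (segAt_mem_range x i j _)).1 h4
  have h4 : ∀ i l, ∃ a : L, u i l = a • x i l := by
    intro i l
    by_cases hl : l = ⟨0, by omega⟩
    · exact h3 i ⟨1, by omega⟩ l (by simp [hl])
    · exact h3 i _ l hl
  choose a ha using h4
  refine ⟨fun i => ∑ l, a i l, ?_⟩
  rw [← hu, tanMap_apply]
  refine Finset.sum_congr rfl fun i _ => ?_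
  rw [Finset.sum_smul]
  refine Finset.sum_congr rfl fun l _ => ?_
  rw [ha, map_smul, segAt_self]

theorem two_lt_ncard_ball [NeZero n] : 2 < {c : Fin n → Fin 4 | hammingNorm c ≤ 1}.ncard := by
  have h := Set.ncard_le_ncard (s := Set.range fun a : Fin 4 => (Pi.single 0 a : Fin n → Fin 4))
    (t := {c : Fin n → Fin 4 | hammingNorm c ≤ 1}) (by
      rintro _ ⟨a, rfl⟩
      exact hammingNorm_single_le 0 a)
  have hinj : Function.Injective fun a : Fin 4 => (Pi.single 0 a : Fin n → Fin 4) :=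
    fun a a' haa => by simpa using congrFun haa 0
  rw [Set.ncard_range_of_injective hinj, Nat.card_eq_fintype_card, Fintype.card_fin] at h
  omega

/-- Only one of the given points contributes to a decomposable tensor in their span. -/
theorem eq_of_seg_eq_sum_smul [Fintype ι] [NeZero n] {x : ι → Fin n → Fin 4 → L}
    {y : Fin n → Fin 4 → L}
    (hD : ∀ u : ι → Fin n → Fin 4 → L, ∃ D : Derivation ℤ L L, ∀ i j, D ∘ x i j = u i j)
    (b : ι → Fin n → Basis (Fin 4) L (Fin 4 → L)) (hb : ∀ i j, b i j 0 = x i j)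
    (hbli : LinearIndepOn L (frameSeg fun i j => ⇑(b i j)) {z | hammingNorm z.2 ≤ 1})
    (c : Fin n → Basis (Fin 4) L (Fin 4 → L)) (hc : ∀ j, c j 0 = y j)
    {a : ι → L} (h : seg y = ∑ i, a i • seg (x i)) {i i' : ι} (hi : a i ≠ 0) (hi' : a i' ≠ 0) :
    i = i' := by
  classical
  by_contra hne
  let T : Submodule L ((Fin n → Fin 4) → L) := Submodule.span L
    ((frameSeg (fun (_ : Unit) j => ⇑(c j)) '' {z | hammingNorm z.2 ≤ 1}) ∪
      Set.range fun i => seg (x i))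
  have hseg : ∀ i, seg (x i) ∈ T := fun i => Submodule.subset_span (Or.inr ⟨i, rfl⟩)
  have hmem : ∀ i, a i ≠ 0 → ∀ j u, segAt (x i) j u ∈ T := by
    intro i hi j u
    obtain ⟨D, hDu⟩ := hD (Pi.single i (Pi.single j u))
    have h1 : D ∘ seg y ∈ T := by
      have h2 := derivation_sum_seg D fun _ : Unit => y
      rw [Fintype.sum_unique] at h2
      have h3 : D ∘ seg y ∈ LinearMap.range (tanMap fun _ : Unit => y) := ⟨_, h2.symm⟩
      rw [range_tanMap (fun _ : Unit => y) (fun _ => c) (fun _ => hc)] at h3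
      exact Submodule.span_mono Set.subset_union_left h3
    have h2 : D ∘ seg y = ∑ i', (a i' • (D ∘ seg (x i')) + D (a i') • seg (x i')) := by
      rw [h, derivation_sum_comp]
      exact Finset.sum_congr rfl fun i' _ => derivation_smul_comp D (a i') (seg (x i'))
    rw [h2, Finset.sum_add_distrib] at h1
    have h3 := (Submodule.add_mem_iff_left _ (Submodule.sum_mem _ fun i' _ =>
      Submodule.smul_mem _ _ (hseg i'))).1 h1
    have h4 : ∑ i', a i' • (D ∘ seg (x i')) = a i • segAt (x i) j u := by
      rw [Finset.sum_eq_single i]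
      · rw [derivation_seg, Finset.sum_eq_single j]
        · simp [hDu]
        · intro l _ hl
          simp [hDu, hl]
        · simp
      · intro i' _ hi'
        rw [derivation_seg]
        simp [hDu, hi']
      · simp
    rw [h4] at h3
    exact (Submodule.smul_mem_iff _ hi).1 h3
  set B : Set (Fin n → Fin 4) := {c | hammingNorm c ≤ 1} with hB
  let A : Set (ι × (Fin n → Fin 4)) := (({i, i'} : Set ι) ×ˢ B) ∪ (({i, i'} : Set ι)ᶜ ×ˢ {0})
  have hAB : A ⊆ {z | hammingNorm z.2 ≤ 1} := by
    rintro z (hz | hz)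
    · exact hz.2
    · have : z.2 = 0 := hz.2
      simp [this]
  have hAT : ∀ z ∈ A, frameSeg (fun i j => ⇑(b i j)) z ∈ T := by
    have hx : ∀ i, (fun l => b i l 0) = x i := fun i => funext (hb i)
    rintro ⟨i₁, d⟩ (hz | hz)
    · obtain ⟨j, hj⟩ := exists_eq_single_of_hammingNorm_le_one hz.2
      simp only at hj
      rw [hj, frameSeg_single, hx]
      refine hmem i₁ ?_ j _
      rcases hz.1 with h1 | h1
      · simp only at h1; rwa [h1]
      · simp only [Set.mem_singleton_iff] at h1; rwa [h1]
    · have : d = 0 := hz.2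
      rw [this, frameSeg_zero, hx]
      exact hseg i₁
  have hcard : A.ncard ≤ finrank L T := by
    have := Fintype.ofFinite A
    have h1 := finrank_span_eq_card (hbli.mono hAB)
    rw [← Nat.card_coe_set_eq, Nat.card_eq_fintype_card, ← h1]
    refine Submodule.finrank_mono ?_
    rw [Submodule.span_le]
    rintro _ ⟨z, rfl⟩
    exact hAT z.1 z.2
  have hA : A.ncard = 2 * B.ncard + (Nat.card ι - 2) := by
    have hd : Disjoint (({i, i'} : Set ι) ×ˢ B) (({i, i'} : Set ι)ᶜ ×ˢ {0}) :=
      Set.disjoint_left.2 fun z hz hz' => hz'.1 hz.1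
    rw [Set.ncard_union_eq hd, Set.ncard_prod, Set.ncard_prod, Set.ncard_singleton, mul_one,
      Set.ncard_compl, Set.ncard_pair hne]
  have hT : finrank L T ≤ B.ncard + Nat.card ι := by
    have h1 : (frameSeg (fun (_ : Unit) j => ⇑(c j)) '' {z | hammingNorm z.2 ≤ 1}).ncard
        ≤ B.ncard := by
      have : {z : Unit × (Fin n → Fin 4) | hammingNorm z.2 ≤ 1} = Set.univ ×ˢ B := by
        ext z; simp [hB]
      refine (Set.ncard_image_le (Set.toFinite _)).trans ?_
      rw [this, Set.ncard_prod]
      simp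
    have h2 : (Set.range fun i => seg (x i)).ncard ≤ Nat.card ι := by
      rw [← Set.image_univ, ← Set.ncard_univ]
      exact Set.ncard_image_le (Set.toFinite _)
    have hf : ((frameSeg (fun (_ : Unit) j => ⇑(c j)) '' {z | hammingNorm z.2 ≤ 1}) ∪
      Set.range fun i => seg (x i)).Finite := Set.toFinite _
    have := hf.fintype
    have h3 := finrank_span_le_card (R := L)
      ((frameSeg (fun (_ : Unit) j => ⇑(c j)) '' {z | hammingNorm z.2 ≤ 1}) ∪
      Set.range fun i => seg (x i))
    rw [← Set.ncard_eq_toFinset_card'] at h3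
    have h4 := Set.ncard_union_le
      (frameSeg (fun (_ : Unit) j => ⇑(c j)) '' {z | hammingNorm z.2 ≤ 1})
      (Set.range fun i => seg (x i))
    change finrank L T ≤ _ at h3
    omega
  have h2 : 2 ≤ Nat.card ι := by
    rw [← Set.ncard_pair hne, ← Set.ncard_univ]
    exact Set.ncard_le_ncard (Set.subset_univ _)
  have h3 : 2 < B.ncard := two_lt_ncard_ball
  omega

/-- Uniqueness of the decomposition at the generic point. -/
theorem exists_perm_of_sum_seg_eq [Fintype ι] (hn : 2 ≤ n) {x y : ι → Fin n → Fin 4 → L}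
    (hD : ∀ u : ι → Fin n → Fin 4 → L, ∃ D : Derivation ℤ L L, ∀ i j, D ∘ x i j = u i j)
    (hS : ∀ i j, ∃ b : ι → Fin n → Basis (Fin 4) L (Fin 4 → L), (∀ i j, b i j 0 = x i j) ∧
      LinearIndepOn L (frameSeg fun i j => ⇑(b i j))
        {z | hammingNorm z.2 ≤ 1 ∨ (z.1 = i ∧ z.2 j = 1 ∧ hammingNorm z.2 ≤ 2)})
    (hy : ∀ i j, y i j ≠ 0) (hxy : ∑ i, seg (x i) = ∑ i, seg (y i)) :
    ∃ π : Equiv.Perm ι, ∀ i, seg (y i) = seg (x (π i)) := by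
  classical
  have : NeZero n := ⟨by omega⟩
  rcases isEmpty_or_nonempty ι with hι | ⟨⟨i₀⟩⟩
  · exact ⟨1, fun i => hι.elim i⟩
  obtain ⟨b, hb, hbli'⟩ := hS i₀ 0
  have hbli : LinearIndepOn L (frameSeg fun i j => ⇑(b i j)) {z | hammingNorm z.2 ≤ 1} :=
    hbli'.mono fun z hz => Or.inl hz
  choose c hc using fun i j => exists_basis_of_ne_zero (hy i j)
  obtain ⟨hT, hcli⟩ := linearIndepOn_of_range_tanMap_le b c hb hc hbli
    (range_tanMap_le_of_sum_seg_eq hD hxy)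
  choose a ha using exists_seg_eq_sum_smul hn hD hS c hc hxy hT hcli
  have hx : ∀ i, frameSeg (fun i j => ⇑(b i j)) (i, 0) = seg (x i) := fun i => by
    rw [frameSeg_zero]
    congr 1
    exact funext (hb i)
  have hxli : LinearIndependent L fun i => seg (x i) := by
    have := LinearIndependent.comp hbli (fun i : ι => ⟨(i, 0), by simp⟩) (fun i i' h => by
      simpa using h)
    convert this using 1
    ext1 i
    exact (hx i).symm
  have hyne : ∀ m, seg (y m) ≠ 0 := by
    intro m h0
    have h1 := LinearIndependent.ne_zero (⟨(m, 0), by simp⟩ :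
      {z : ι × (Fin n → Fin 4) | hammingNorm z.2 ≤ 1}) hcli
    apply h1
    change frameSeg (fun i j => ⇑(c i j)) (m, 0) = 0
    rw [frameSeg_zero, ← h0]
    congr 1
    exact funext (hc m)
  have hex : ∀ m, ∃ i, a m i ≠ 0 := by
    intro m
    by_contra! h0
    exact hyne m (by simp [ha m, h0])
  choose π hπ using hex
  have hval : ∀ m i, i ≠ π m → a m i = 0 := by
    intro m i hi
    by_contra h0
    exact hi (eq_of_seg_eq_sum_smul hD b hb hbli (c m) (hc m) (ha m) h0 (hπ m))
  have hsum : ∀ i, ∑ m, a m i = 1 := by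
    intro i
    have h1 : ∑ i, ((∑ m, a m i) - 1) • seg (x i) = 0 := by
      simp only [sub_smul, one_smul, Finset.sum_sub_distrib, Finset.sum_smul]
      rw [Finset.sum_comm, hxy, sub_eq_zero]
      exact Finset.sum_congr rfl fun m _ => (ha m).symm
    exact sub_eq_zero.1 (Fintype.linearIndependent_iff.1 hxli _ h1 i)
  have hsurj : Function.Surjective π := by
    intro i
    by_contra! h0
    have := hsum i
    rw [Finset.sum_eq_zero fun m _ => hval m i (h0 m).symm] at this
    exact zero_ne_one this
  have hbij : Function.Bijective π := Finite.surjective_iff_bijective.1 hsurj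
  refine ⟨Equiv.ofBijective π hbij, fun m => ?_⟩
  have h1 : a m (π m) = 1 := by
    rw [← hsum (π m), Finset.sum_eq_single m]
    · intro m' _ hm'
      exact hval m' _ fun h => hm' (hbij.1 h.symm)
    · simp
  rw [ha m, Finset.sum_eq_single (π m)]
  · simp [h1]
  · intro i _ hi
    rw [hval m i hi, zero_smul]
  · simp

end Uniqueness

theorem map_seg {n : ℕ} {R S : Type} [CommRing R] [CommRing S] (φ : R →+* S)
    (x : Fin n → Fin 4 → R) (f : Fin n → Fin 4) :
    φ (seg x f) = seg (fun j a => φ (x j a)) f := by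
  simp [seg]

/-- Frames over `ℂ` with independent products give such frames at the generic point. -/
theorem FrameIndep.exists_generic_basis {n k : ℕ} {A : Set (Fin k × (Fin n → Fin 4))}
    (h : FrameIndep A) (hA : {z | hammingNorm z.2 ≤ 1} ⊆ A) {L : Type} [Field L]
    (φ : MvPolynomial (Fin k × Fin n × Fin 4) ℂ →+* L) (hφ : Function.Injective φ) :
    ∃ b : Fin k → Fin n → Module.Basis (Fin 4) L (Fin 4 → L),
      (∀ i j, b i j 0 = fun a => φ (MvPolynomial.X (i, j, a))) ∧
      LinearIndepOn L (frameSeg fun i j => ⇑(b i j)) A := by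
  obtain ⟨g, hg⟩ := h
  let G : Fin k → Fin n → Fin 4 → Fin 4 → MvPolynomial (Fin k × Fin n × Fin 4) ℂ :=
    fun i j a a' => if a = 0 then MvPolynomial.X (i, j, a') else MvPolynomial.C (g i j a a')
  have hG : (fun z f => MvPolynomial.eval (fun q : Fin k × Fin n × Fin 4 => g q.1 q.2.1 0 q.2.2)
      (frameSeg G z f)) = frameSeg g := by
    ext z f
    rw [frameSeg, map_seg, frameSeg]
    congr 1
    ext j a
    by_cases h0 : z.2 j = 0 <;> simp [G, h0]
  obtain ⟨d, hd, hd'⟩ := exists_forall_linearIndepOn (frameSeg G) A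
    (fun q => g q.1 q.2.1 0 q.2.2) (by rw [hG]; exact hg)
  have h1 := hd' L φ (fun h0 => hd (by rw [(map_eq_zero_iff φ hφ).1 h0, map_zero]))
  have h2 : (fun z f => φ (frameSeg G z f)) = frameSeg fun i j a a' => φ (G i j a a') := by
    ext z f
    rw [frameSeg, map_seg, frameSeg]
  rw [h2] at h1
  obtain ⟨b, hb⟩ := exists_basis_of_linearIndepOn _ (h1.mono hA)
  refine ⟨b, fun i j => ?_, by rw [hb]; exact h1⟩
  rw [show b i j 0 = (fun i j => ⇑(b i j)) i j 0 from rfl, hb]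
  simp [G]

/-- Uniqueness of the decomposition at a general point. -/
theorem exists_polynomial_forall_exists_perm {n k : ℕ} (hn : 5 ≤ n)
    (h : k * (3 * n + 1) ≤ 63 * 4 ^ (n - 3)) :
    ∃ F : MvPolynomial (Fin k × Fin n × Fin 4) ℂ, F ≠ 0 ∧
      ∀ p : Fin k → Fin n → Fin 4 → ℂ, MvPolynomial.eval (fun z => p z.1 z.2.1 z.2.2) F ≠ 0 →
      ∀ q : Fin k → Fin n → Fin 4 → ℂ, (∀ i j, q i j ≠ 0) →
        ∑ i, seg (q i) = ∑ i, seg (p i) →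
        ∃ π : Equiv.Perm (Fin k), ∀ i, seg (q i) = seg (p (π i)) := by
  classical
  let τ := Fin k × Fin n × Fin 4
  let Q : Fin k → Fin n → Fin 4 → MvPolynomial τ (MvPolynomial τ ℂ) :=
    fun i j a => MvPolynomial.X (i, j, a)
  let P : Fin k → Fin n → Fin 4 → MvPolynomial τ (MvPolynomial τ ℂ) :=
    fun i j a => MvPolynomial.C (MvPolynomial.X (i, j, a))
  let E : (Fin n → Fin 4) → MvPolynomial τ (MvPolynomial τ ℂ) :=
    fun f => ∑ i, seg (Q i) f - ∑ i, seg (P i) f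
  let H : (Equiv.Perm (Fin k) → Fin k × (Fin n → Fin 4)) × (Fin k → Fin n → Fin 4) →
      MvPolynomial τ (MvPolynomial τ ℂ) := fun c =>
    (∏ π, (seg (Q (c.1 π).1) (c.1 π).2 - seg (P (π (c.1 π).1)) (c.1 π).2)) *
      ∏ i, ∏ j, Q i j (c.2 i j)
  have key : ∀ c, ∃ F : MvPolynomial τ ℂ, F ≠ 0 ∧ ∀ p : τ → ℂ, MvPolynomial.eval p F ≠ 0 →
      ∀ q : τ → ℂ, (∀ a, MvPolynomial.eval₂ (MvPolynomial.eval p) q (E a) = 0) →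
        MvPolynomial.eval₂ (MvPolynomial.eval p) q (H c) = 0 := by
    intro c
    refine exists_ne_zero_forall_eq_zero E (H c) ?_
    intro L _ _ _ _ _ y hy
    set x : Fin k → Fin n → Fin 4 → L :=
      fun i j a => algebraMap (MvPolynomial τ ℂ) L (MvPolynomial.X (i, j, a)) with hx
    set y' : Fin k → Fin n → Fin 4 → L := fun i j a => y (i, j, a) with hy'
    have hinj : Function.Injective (algebraMap (MvPolynomial τ ℂ) L) := by
      rw [IsScalarTower.algebraMap_eq (MvPolynomial τ ℂ) (FractionRing (MvPolynomial τ ℂ)) L]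
      exact (algebraMap (FractionRing (MvPolynomial τ ℂ)) L).injective.comp
        (IsFractionRing.injective _ _)
    have hQ : ∀ i f, MvPolynomial.aeval y (seg (Q i) f) = seg (y' i) f := fun i f => by
      simp [seg, Q, hy']
    have hP : ∀ i f, MvPolynomial.aeval y (seg (P i) f) = seg (x i) f := fun i f => by
      simp [seg, P, hx]
    simp only [H, map_mul, map_prod, map_sub, hQ, hP]
    by_cases h0 : ∏ i, ∏ j, MvPolynomial.aeval y (Q i j (c.2 i j)) = 0
    · rw [h0, mul_zero]
    · simp only [Finset.prod_ne_zero_iff, Q, MvPolynomial.aeval_X] at h0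
      have hxy : ∑ i, seg (x i) = ∑ i, seg (y' i) := by
        ext f
        have := hy f
        simp only [E, map_sub, map_sum, hQ, hP, sub_eq_zero] at this
        simp [Finset.sum_apply, this]
      obtain ⟨π, hπ⟩ := exists_perm_of_sum_seg_eq (x := x) (y := y') (by omega) (fun u => by
          obtain ⟨D, hD⟩ := exists_derivation_of_finite_fractionRing L
            (fun z : τ => u z.1 z.2.1 z.2.2)
          exact ⟨D, fun i j => funext fun a => hD (i, j, a)⟩)
        (fun i j => (frameIndep_special hn h i j).exists_generic_basis
          (fun z hz => Or.inl hz) _ hinj)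
        (fun i j h1 => h0 i (Finset.mem_univ _) j (Finset.mem_univ _) (congrFun h1 _)) hxy
      rw [Finset.prod_eq_zero (Finset.mem_univ π) (by rw [hπ, sub_self]), zero_mul]
  choose F hF hF' using key
  refine ⟨∏ c, F c, Finset.prod_ne_zero_iff.2 fun c _ => hF c, fun p hp q hq hsum => ?_⟩
  rw [map_prod, Finset.prod_ne_zero_iff] at hp
  set ev := MvPolynomial.eval₂Hom (MvPolynomial.eval fun z : τ => p z.1 z.2.1 z.2.2)
    (fun z : τ => q z.1 z.2.1 z.2.2) with hev
  have hQ : ∀ i f, ev (seg (Q i) f) = seg (q i) f := fun i f => by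
    simp [seg, Q, hev]
  have hP : ∀ i f, ev (seg (P i) f) = seg (p i) f := fun i f => by
    simp [seg, P, hev]
  by_contra! hno
  have hno' : ∀ π : Equiv.Perm (Fin k), ∃ c : Fin k × (Fin n → Fin 4),
      seg (q c.1) c.2 ≠ seg (p (π c.1)) c.2 := fun π => by
    obtain ⟨i, hi⟩ := hno π
    obtain ⟨f, hf⟩ := Function.ne_iff.1 hi
    exact ⟨(i, f), hf⟩
  choose c hc using hno'
  choose e he using fun i j => Function.ne_iff.1 (hq i j)
  have h1 : ev (H (c, e)) = 0 := by
    refine hF' (c, e) _ (hp _ (Finset.mem_univ _)) _ fun f => ?_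
    change ev (E f) = 0
    simp only [E, map_sub, map_sum, hQ, hP]
    have := congrFun hsum f
    simp only [Finset.sum_apply] at this
    rw [this, sub_self]
  simp only [H, map_mul, map_prod, map_sub, hQ, hP] at h1
  rcases mul_eq_zero.1 h1 with h2 | h2
  · obtain ⟨π, -, hπ⟩ := Finset.prod_eq_zero_iff.1 h2
    exact hc π (sub_eq_zero.1 hπ)
  · obtain ⟨i, -, hi⟩ := Finset.prod_eq_zero_iff.1 h2
    obtain ⟨j, -, hj⟩ := Finset.prod_eq_zero_iff.1 hi
    exact he i j (by simpa [Q, hev] using hj)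

/-- The coordinates of a tensor in the standard basis. -/
def tenCoords (n : ℕ) : Ten n (fun _ => 3) ≃ₗ[ℂ] ((Fin n → Fin 4) → ℂ) :=
  (Basis.piTensorProduct fun _ : Fin n => Pi.basisFun ℂ (Fin 4)).equivFun

theorem tenCoords_tprod {n : ℕ} (v : Fin n → Fin 4 → ℂ) :
    tenCoords n (tprod ℂ v) = seg v := by
  ext f
  simp [tenCoords, seg, Basis.piTensorProduct_repr_tprod_apply]

/-- `n ≥ 5` copies of `ℙ³` are `k`-identifiable
for `k ≤ (4^n - 4^{n-3})/(3n+1)`. -/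
theorem stmt_10 (n : ℕ) (hn : 5 ≤ n) (k : ℕ) (hk : 0 < k)
    (h : (k : ℚ) ≤ ((4 ^ n - 4 ^ (n - 3) : ℕ) : ℚ) / (3 * n + 1)) :
    Identifiable n (fun _ => 3) k := by
  have hb : k * (3 * n + 1) ≤ 63 * 4 ^ (n - 3) := by
    have h1 : 4 ^ n - 4 ^ (n - 3) = 63 * 4 ^ (n - 3) := by
      have : 4 ^ n = 64 * 4 ^ (n - 3) := by
        conv_lhs => rw [show n = n - 3 + 3 by omega, pow_add]
        ring
      omega
    rw [h1, le_div_iff₀ (by positivity)] at h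
    exact_mod_cast h
  obtain ⟨F, hF, hF'⟩ := exists_polynomial_forall_exists_perm hn hb
  let e : Fin k × Fin n × Fin 4 → WIdx n (fun _ => 3) k := fun z => (z.1, ⟨z.2.1, z.2.2⟩)
  let F₁ : MvPolynomial (Fin k × Fin n × Fin 4) ℂ := F * ∏ i, ∏ j, MvPolynomial.X (i, j, 0)
  have hF₁ : F₁ ≠ 0 := mul_ne_zero hF (Finset.prod_ne_zero_iff.2 fun i _ =>
    Finset.prod_ne_zero_iff.2 fun j _ => MvPolynomial.X_ne_zero _)
  have heval : ∀ p : Fin k → Fin n → Fin 4 → ℂ,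
      evalW (q := n) (a := fun _ => 3) (MvPolynomial.rename e F₁) p
        = MvPolynomial.eval (fun z => p z.1 z.2.1 z.2.2) F₁ := by
    intro p
    rw [evalW, MvPolynomial.eval_rename]
    rfl
  refine ⟨MvPolynomial.rename e F₁, ?_, fun p hp => ?_⟩
  · obtain ⟨w, hw⟩ : ∃ w, MvPolynomial.eval w F₁ ≠ 0 := by
      by_contra! h0
      exact hF₁ (MvPolynomial.funext fun w => by rw [h0 w, map_zero])
    exact ⟨fun i j a => w (i, j, a), by rw [heval]; exact hw⟩
  · rw [heval, map_mul] at hp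
    have hp1 := left_ne_zero_of_mul hp
    have hp2 := right_ne_zero_of_mul hp
    simp only [map_prod, MvPolynomial.eval_X, Finset.prod_ne_zero_iff] at hp2
    refine ⟨⟨fun i => tprod ℂ (p i), fun i => ⟨p i, fun j h0 => ?_, rfl⟩, rfl⟩, ?_⟩
    · exact hp2 i (Finset.mem_univ _) j (Finset.mem_univ _) (congrFun h0 0)
    · have huniq : ∀ s : Fin k → Ten n (fun _ => 3), (∀ i, IsDecomposable (s i)) →
          ∑ i, s i = Phi (fun _ => 3) p →
          Finset.univ.val.map s = Finset.univ.val.map fun i => tprod ℂ (p i) := by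
        intro s hs hsum
        choose v hv hsv using hs
        obtain ⟨π, hπ⟩ := hF' p hp1 v hv (by
          have := congrArg (tenCoords n) hsum
          simp only [Phi, map_sum, hsv] at this
          exact (Finset.sum_congr rfl fun i _ => (tenCoords_tprod (v i)).symm).trans
            (this.trans (Finset.sum_congr rfl fun i _ => tenCoords_tprod (p i))))
        have hs' : s = (fun i => tprod ℂ (p i)) ∘ π := by
          ext1 i
          apply (tenCoords n).injective
          rw [hsv i]
          exact (tenCoords_tprod (v i)).trans ((hπ i).trans (tenCoords_tprod (p (π i))).symm)
        rw [hs', ← Multiset.map_map, Multiset.map_univ_val_equiv]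
      intro s t hs ht hsum htum
      rw [huniq s hs hsum, huniq t ht htum]
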